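/- arXiv:1511.01616 — 2 statements merged into one kernel-verified Lean document; each statement's English description precedes it below -/
import Mathlib

section
/- Let q be an odd prime power of the form q = 2am − 1 where a is an odd positive integer and m a positive integer. Then for all integers c_1, c_2, c_3 ≥ 0 with c_1 + c_2 ≤ a, c_1 + c_3 ≤ a and c_1 + c_2 + c_3 ≥ 1, and every integer s with 1 ≤ s ≤ (a+1)m − 2, there exists a linear code C over 𝔽_{q²} of length n = (c_2 + c_3)(q²−1)/(2a) + c_1((q²−1)/a − q + 1), dimension n − s, and minimum distance s + 1, such that C^{⊥H} ⊆ C. -/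
/-- Hamming weight: the number of nonzero coordinates. -/
noncomputable def wt {F : Type*} [Zero F] {n : ℕ} (x : Fin n → F) : ℕ :=
  Set.ncard {i | x i ≠ 0}

/-- The Hermitian dual code of a linear code C ⊆ (F_{q²})^n. -/
noncomputable def dualH {F : Type*} [Field F] (q n : ℕ) (C : Submodule F (Fin n → F)) :
    Submodule F (Fin n → F) where
  carrier := {x | ∀ y ∈ C, ∑ i, x i * (y i) ^ q = 0}
  add_mem' := by
    intro a b ha hb y hy
    simp only [Set.mem_setOf_eq] at *
    simp [add_mul, Finset.sum_add_distrib, ha y hy, hb y hy]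
  zero_mem' := by
    intro y hy; simp
  smul_mem' := by
    intro c x hx y hy
    simp only [Set.mem_setOf_eq] at *
    simp [smul_eq_mul, mul_assoc, ← Finset.mul_sum, hx y hy]


theorem exists_frob {F : Type*} [Field F] [Fintype F] (q : ℕ) (hpp : IsPrimePow q)
    (hF : Fintype.card F = q ^ 2) : ∃ φ : F →+* F, ∀ x, φ x = x ^ q := by
  obtain ⟨p, k, hp, hk, rfl⟩ := hpp
  have : Fact p.Prime := ⟨hp.nat_prime⟩
  rw [← pow_mul] at hF
  have : CharP F p := charP_of_card_eq_prime_pow hF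
  have : ExpChar F p := inferInstance
  exact ⟨iterateFrobenius F p k, fun x => iterateFrobenius_def p k x⟩

theorem weight_bound {F : Type*} [Field F] {n s : ℕ} (b u y : Fin n → F)
    (hb : Function.Injective b) (hu : ∀ i, u i ≠ 0)
    (h : ∀ j < s, ∑ i, y i * (u i * b i ^ j) = 0) (hy : y ≠ 0) : s + 1 ≤ wt y := by
  classical
  by_contra hlt
  push Not at hlt
  set T : Finset (Fin n) := Finset.univ.filter (fun i => y i ≠ 0) with hT
  have hc : T.card ≤ s := by
    have : wt y = T.card := by
      unfold wt
      rw [Set.ncard_eq_toFinset_card']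
      congr 1
      ext i; simp [hT]
    omega
  obtain ⟨i0, hi0⟩ : ∃ i, y i ≠ 0 := by
    by_contra hcon
    push Not at hcon
    exact hy (funext hcon)
  have hi0T : i0 ∈ T := by simp [hT, hi0]
  set p : Polynomial F := ∏ i ∈ T.erase i0, (Polynomial.X - Polynomial.C (b i)) with hp
  have hdeg : p.natDegree < s := by
    rw [hp, Polynomial.natDegree_prod_of_monic _ _ (fun i _ => Polynomial.monic_X_sub_C _)]
    simp [Finset.card_erase_of_mem hi0T]
    have : 0 < T.card := Finset.card_pos.mpr ⟨_, hi0T⟩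
    omega
  have h0 : ∑ i, y i * (u i * p.eval (b i)) = 0 := by
    have : ∀ i, y i * (u i * p.eval (b i))
        = ∑ j ∈ Finset.range s, p.coeff j * (y i * (u i * b i ^ j)) := by
      intro i
      rw [Polynomial.eval_eq_sum_range' hdeg, Finset.mul_sum, Finset.mul_sum]
      exact Finset.sum_congr rfl fun j _ => by ring
    simp_rw [this]
    rw [Finset.sum_comm]
    refine Finset.sum_eq_zero fun j hj => ?_
    rw [← Finset.mul_sum, h j (Finset.mem_range.mp hj), mul_zero]
  rw [Finset.sum_eq_single i0] at h0
  · have hpe : p.eval (b i0) ≠ 0 := by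
      rw [hp, Polynomial.eval_prod, Finset.prod_ne_zero_iff]
      intro i hi
      simp only [Polynomial.eval_sub, Polynomial.eval_X, Polynomial.eval_C]
      rw [sub_ne_zero]
      intro he
      exact (Finset.mem_erase.mp hi).1 (hb he).symm
    exact mul_ne_zero hi0 (mul_ne_zero (hu i0) hpe) h0
  · intro i _ hne
    by_cases hyi : y i = 0
    · simp [hyi]
    · have : p.eval (b i) = 0 := by
        rw [hp, Polynomial.eval_prod]
        apply Finset.prod_eq_zero (i := i)
        · simp [hT, hyi, hne]
        · simp
      simp [this]
  · simp

/-- The functional `y ↦ ∑ xᵢ yᵢ`. -/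
noncomputable def dotFun {F : Type*} [Field F] {n : ℕ} (x : Fin n → F) : (Fin n → F) →ₗ[F] F where
  toFun y := ∑ i, x i * y i
  map_add' := by intro y z; simp [mul_add, Finset.sum_add_distrib]
  map_smul' := by
    intro c y
    simp only [Pi.smul_apply, smul_eq_mul, RingHom.id_apply, Finset.mul_sum]
    exact Finset.sum_congr rfl fun i _ => by ring

theorem code_exists {F : Type*} [Field F] [Fintype F] (q n s : ℕ) (hpp : IsPrimePow q)
    (hF : Fintype.card F = q ^ 2) (hs : s < n) (a v : Fin n → F) (ha : Function.Injective a)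
    (hv : ∀ i, v i ≠ 0)
    (hsum : ∀ j < s, ∀ l < s, ∑ i, v i ^ (q + 1) * a i ^ (q * j + l) = 0) :
    ∃ C : Submodule F (Fin n → F), dualH q n C ≤ C ∧ Module.finrank F C = n - s ∧
      IsLeast {d : ℕ | ∃ x ∈ C, x ≠ 0 ∧ wt x = d} (s + 1) := by
  classical
  obtain ⟨φ, hφ⟩ := exists_frob (F := F) q hpp hF
  have hφφ : ∀ x : F, (x ^ q) ^ q = x := by
    intro x
    rw [← pow_mul, ← sq, ← hF]
    exact FiniteField.pow_card x
  have hφinj : Function.Injective (fun x : F => x ^ q) := by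
    intro x y hxy
    have := congrArg (fun z : F => z ^ q) hxy
    simpa only [hφφ] using this
  let M : (Fin n → F) →ₗ[F] (Fin s → F) :=
    { toFun := fun y j => ∑ i, y i * (v i * a i ^ (j : ℕ)) ^ q
      map_add' := by
        intro x y; ext j; simp [add_mul, Finset.sum_add_distrib]
      map_smul' := by
        intro c x; ext j; simp [mul_assoc, Finset.mul_sum] }
  have hM : ∀ y j, M y j = ∑ i, y i * (v i * a i ^ (j : ℕ)) ^ q := fun y j => rfl
  have hmem : ∀ y, y ∈ LinearMap.ker M ↔ ∀ j : Fin s, ∑ i, y i * (v i * a i ^ (j : ℕ)) ^ q = 0 := by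
    intro y
    rw [LinearMap.mem_ker, funext_iff]
    rfl
  have hwt : ∀ y ∈ LinearMap.ker M, y ≠ 0 → s + 1 ≤ wt y := by
    intro y hy hy0
    refine weight_bound (fun i => a i ^ q) (fun i => v i ^ q) y (hφinj.comp ha)
      (fun i => pow_ne_zero _ (hv i)) ?_ hy0
    intro j hj
    rw [← (hmem y).mp hy ⟨j, hj⟩]
    refine Finset.sum_congr rfl fun i _ => ?_
    rw [mul_pow, ← pow_mul, ← pow_mul, mul_comm q j]
  refine ⟨LinearMap.ker M, ?_, ?_, ?_, ?_⟩
  · intro x hx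
    have hx' : ∀ y ∈ LinearMap.ker M, ∑ i, x i * (y i) ^ q = 0 := hx
    let r : Fin s → (Fin n → F) := fun j i => v i * a i ^ (j : ℕ)
    let L : Fin s → (Fin n → F) →ₗ[F] F := fun j => dotFun (r j)
    let K : (Fin n → F) →ₗ[F] F := dotFun x
    have hK : ⨅ j, (L j).ker ≤ K.ker := by
      intro z hz
      rw [Submodule.mem_iInf] at hz
      rw [LinearMap.mem_ker]
      have h1 : (fun i => z i ^ q) ∈ LinearMap.ker M := by
        rw [hmem]
        intro j
        have h2 : ∑ i, r j i * z i = 0 := hz j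
        have := congrArg φ h2
        rw [map_sum, map_zero] at this
        rw [← this]
        refine Finset.sum_congr rfl fun i _ => ?_
        rw [hφ]
        simp only [r]
        ring
      have h3 := hx' _ h1
      simp only [hφφ] at h3
      exact h3
    have hspan := mem_span_of_iInf_ker_le_ker hK
    rw [Submodule.mem_span_range_iff_exists_fun] at hspan
    obtain ⟨c, hc⟩ := hspan
    have hxr : x = ∑ j, c j • r j := by
      ext i
      have := congrArg (fun f : (Fin n → F) →ₗ[F] F => f (Pi.single i 1)) hc
      simpa [L, K, dotFun, LinearMap.sum_apply, Finset.sum_apply, Pi.single_apply] using this.symm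
    rw [hxr]
    refine Submodule.sum_mem _ fun j _ => Submodule.smul_mem _ _ ?_
    rw [hmem]
    intro l
    rw [← hsum l l.2 j j.2]
    refine Finset.sum_congr rfl fun i _ => ?_
    simp only [r]
    ring
  · apply le_antisymm
    · let f : Fin (n - s) → Fin n := fun i => ⟨s + i, by omega⟩
      have := LinearMap.finrank_le_finrank_of_injective
        (f := (LinearMap.funLeft F F f).comp (LinearMap.ker M).subtype) ?_
      · simpa using this
      · rw [← LinearMap.ker_eq_bot, LinearMap.ker_eq_bot']
        rintro ⟨y, hy⟩ h0
        by_contra hne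
        have hy0 : y ≠ 0 := fun h => hne (by simp [h])
        have h1 := hwt y hy hy0
        have h2 : wt y ≤ s := by
          unfold wt
          have hsub : {i | y i ≠ 0} ⊆ ((Finset.univ.filter fun i : Fin n => (i : ℕ) < s : Finset (Fin n)) : Set (Fin n)) := by
            intro i hi
            simp only [Finset.coe_filter, Finset.mem_univ, true_and, Set.mem_setOf_eq]
            by_contra hge
            apply hi
            have := congrFun h0 ⟨i - s, by omega⟩
            simp only [LinearMap.coe_comp, Function.comp, Submodule.coe_subtype, LinearMap.funLeft_apply, f] at this
            rw [← show (⟨s + (i - s), by omega⟩ : Fin n) = i from Fin.ext (by simp; omega)]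
            exact this
          refine (Set.ncard_le_ncard hsub (Set.toFinite _)).trans ?_
          rw [Set.ncard_coe_finset, Fin.card_filter_val_lt]
          omega
        omega
    · have h1 := LinearMap.finrank_range_add_finrank_ker M
      have h2 := Submodule.finrank_le (LinearMap.range M)
      simp only [Module.finrank_fintype_fun_eq_card, Fintype.card_fin] at h1 h2
      omega
  · let e : Fin (s + 1) → Fin n := fun i => ⟨i, by omega⟩
    have he : Function.Injective e := fun i j h => Fin.ext (by simpa [e] using h)
    have hker : (M.comp (Function.ExtendByZero.linearMap F e)).ker ≠ ⊥ :=
      LinearMap.ker_ne_bot_of_finrank_lt (by simp)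
    obtain ⟨z, hz, hz0⟩ := (Submodule.ne_bot_iff _).mp hker
    set y := Function.ExtendByZero.linearMap F e z with hy
    have hyz : ∀ i, y (e i) = z i := fun i => by
      rw [hy]; exact he.extend_apply _ _ _
    have hy0 : y ≠ 0 := by
      intro h
      apply hz0
      ext i
      rw [← hyz, h]; rfl
    have hyk : y ∈ LinearMap.ker M := hz
    refine ⟨y, hyk, hy0, le_antisymm ?_ (hwt y hyk hy0)⟩
    unfold wt
    have hsub : {i | y i ≠ 0} ⊆ Set.range e := by
      intro i hi
      by_contra hne
      apply hi
      rw [hy]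
      exact Function.extend_apply' _ _ _ (fun ⟨j, hj⟩ => hne ⟨j, hj⟩)
    refine (Set.ncard_le_ncard hsub (Set.toFinite _)).trans ?_
    rw [← Set.image_univ]
    refine (Set.ncard_image_le (Set.toFinite _)).trans ?_
    simp
  · rintro d ⟨y, hy, hy0, rfl⟩
    exact hwt y hy hy0

/-- An index set (of exponents of `g`) that admits good weights. -/
def Good {F : Type*} [Field F] (g : F) (q s : ℕ) (I : Finset ℕ) : Prop :=
  ∃ W : ℕ → F, (∀ k ∈ I, W k ≠ 0 ∧ W k ^ q = W k) ∧
    ∀ j < s, ∀ l < s, ∑ k ∈ I, W k * (g ^ k) ^ (q * j + l) = 0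

theorem Good.union {F : Type*} [Field F] {g : F} {q s : ℕ} {I J : Finset ℕ}
    (hI : Good g q s I) (hJ : Good g q s J) (hd : Disjoint I J) : Good g q s (I ∪ J) := by
  classical
  obtain ⟨W, hW, hWs⟩ := hI
  obtain ⟨V, hV, hVs⟩ := hJ
  have hJI : ∀ k ∈ J, k ∉ I := fun k hk hk' => Finset.disjoint_left.mp hd hk' hk
  refine ⟨fun k => if k ∈ I then W k else V k, ?_, ?_⟩
  · intro k hk
    by_cases h : k ∈ I
    · simpa [h] using hW k h
    · simpa [h] using hV k (by simpa [h] using hk)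
  · intro j hj l hl
    rw [Finset.sum_union hd]
    have h1 := hWs j hj l hl
    have h2 := hVs j hj l hl
    rw [← add_zero (0 : F)]
    nth_rewrite 1 [← h1]
    rw [← h2]
    congr 1
    · exact Finset.sum_congr rfl fun k hk => by simp [hk]
    · exact Finset.sum_congr rfl fun k hk => by simp [hJI k hk]

theorem Good.biUnion {F : Type*} [Field F] {g : F} {q s : ℕ} (S : Finset ℕ) (f : ℕ → Finset ℕ)
    (hf : ∀ i ∈ S, Good g q s (f i))
    (hd : ∀ i ∈ S, ∀ j ∈ S, i ≠ j → Disjoint (f i) (f j)) : Good g q s (S.biUnion f) := by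
  classical
  induction S using Finset.induction_on with
  | empty => exact ⟨fun _ => 1, by simp, by simp⟩
  | insert i S hi ih =>
    rw [Finset.biUnion_insert]
    refine Good.union (hf i (by simp)) (ih (fun j hj => hf j (by simp [hj])) ?_) ?_
    · intro k hk l hl
      exact hd k (by simp [hk]) l (by simp [hl])
    · rw [Finset.disjoint_biUnion_right]
      intro j hj
      exact hd i (by simp) j (by simp [hj]) (fun h => hi (h ▸ hj))

theorem geo_sum {F : Type*} [Field F] (g : F) (N r M E i : ℕ) (hg : orderOf g = N)
    (hN : N = r * M) (hr : 0 < r) (hE : ¬ M ∣ E) :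
    ∑ t ∈ Finset.range M, (g ^ (i + r * t)) ^ E = 0 := by
  have h1 : g ^ (r * E) ≠ 1 := by
    intro h
    rw [← orderOf_dvd_iff_pow_eq_one, hg, hN] at h
    exact hE (Nat.dvd_of_mul_dvd_mul_left hr h)
  have h2 : (g ^ (r * E)) ^ M = 1 := by
    rw [← pow_mul, ← orderOf_dvd_iff_pow_eq_one, hg, hN]
    exact ⟨E, by ring⟩
  have h3 : ∀ t, (g ^ (i + r * t)) ^ E = g ^ (i * E) * (g ^ (r * E)) ^ t := by
    intro t; ring
  simp_rw [h3]
  rw [← Finset.mul_sum]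
  have h4 := mul_neg_geom_sum (g ^ (r * E)) M
  rw [h2, sub_self] at h4
  rcases mul_eq_zero.mp h4 with h | h
  · exact absurd (sub_eq_zero.mp h).symm h1
  · rw [h, mul_zero]

/-- index block of first kind -/
def blkA (q a m i : ℕ) : Finset ℕ :=
  (Finset.range (m * (q - 1))).image (fun t => i + 2 * a * t)

/-- index block of second kind -/
def blkB (q a m i : ℕ) : Finset ℕ :=
  ((Finset.range (2 * m * (q - 1))).filter (fun t => ¬ 2 * m ∣ t)).image (fun t => i + a * t)

theorem arithA (a m j l s k : ℕ) (haodd : Odd a) (ham : 2 ≤ a * m) (hm : 0 < m)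
    (hs2 : s ≤ (a + 1) * m - 2) (hj : j < s) (hl : l < s)
    (h : (2 * a * m - 1) * j + l + a * m * (3 * a * m - m - 1) = m * (2 * a * m - 1 - 1) * k) :
    False := by
  obtain ⟨b, rfl⟩ := haodd
  zify at *
  have e1 : ((2 * (2 * b + 1) * m - 1 : ℕ) : ℤ) = 2 * (2 * b + 1) * m - 1 := by
    rw [Nat.cast_sub (by nlinarith)]; push_cast; ring
  have e2 : ((2 * (2 * b + 1) * m - 1 - 1: ℕ) : ℤ) = 2 * (2 * b + 1) * m - 2 := by
    rw [Nat.sub_sub, Nat.cast_sub (by nlinarith)]; push_cast; ring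
  have e3 : ((3 * (2 * b + 1) * m - m - 1: ℕ) : ℤ) = 3 * (2 * b + 1) * m - m - 1 := by
    rw [Nat.sub_sub, Nat.cast_sub (by nlinarith)]; push_cast; ring
  have e4 : (((2 * b + 1 + 1) * m - 2: ℕ) : ℤ) = (2 * b + 2) * m - 2 := by
    rw [Nat.cast_sub (by nlinarith)]; push_cast; ring
  rw [e1, e2, e3] at h
  rw [e4] at hs2
  generalize hB : (b : ℤ) = B at *
  generalize hMm : (m : ℤ) = M at *
  generalize hJ : (j : ℤ) = J at *
  generalize hLl : (l : ℤ) = L at *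
  generalize hK : (k : ℤ) = K at *
  generalize hS : (s : ℤ) = S at *
  have hB0 : 0 ≤ B := by omega
  have hJ0 : 0 ≤ J := by omega
  have hL0 : 0 ≤ L := by omega
  have hBM : 0 ≤ B * M := by positivity
  -- D = a m - 1
  have hD : 0 < (2 * B + 1) * M - 1 := by linarith
  -- f + J + L = (odd) * D
  have key : 3 * (2 * B + 1) * M - M - 1 + J + L =
      ((2 * B + 1) * M - 1) * (2 * (M * K - J - (3 * B + 1) * M) + 1) := by
    linarith [h]
  obtain ⟨u, hu⟩ : ∃ u, u = M * K - J - (3 * B + 1) * M := ⟨_, rfl⟩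
  rw [← hu] at key
  have u1 : 0 < u := by
    by_contra hc
    have h0 : 0 ≤ -u := by omega
    have := mul_nonneg hD.le h0
    linarith
  have u2 : u < 3 := by
    by_contra hc
    have h0 : 0 ≤ u - 3 := by omega
    have := mul_nonneg hD.le h0
    linarith
  have : u = 1 ∨ u = 2 := by omega
  rcases this with h1 | h1
  · rw [h1] at key hu
    have hd : M ∣ J + 1 := ⟨K - (3 * B + 1), by linarith⟩
    have := Int.le_of_dvd (by omega) hd
    linarith
  · rw [h1] at key hu
    have hd : M ∣ J + 2 - (2 * B + 1) * M := ⟨K - (3 * B + 1) - (2 * B + 1), by linarith⟩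
    have := Int.le_of_dvd (by linarith) hd
    linarith

theorem arithB (a m j l s ε : ℕ) (haodd : Odd a) (ham : 2 ≤ a * m) (hm : 0 < m)
    (hs2 : s ≤ (a + 1) * m - 2) (hj : j < s) (hl : l < s) (hε : ε ≤ 1)
    (h : 2 * m * (2 * a * m - 1 - 1) ∣
      (2 * a * m - 1) * j + l + 1 + (2 * a * m - 1 - 1) * ε) :
    False := by
  obtain ⟨b, rfl⟩ := haodd
  obtain ⟨k, h⟩ := h
  zify at *
  have e1 : ((2 * (2 * b + 1) * m - 1 : ℕ) : ℤ) = 2 * (2 * b + 1) * m - 1 := by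
    rw [Nat.cast_sub (by linarith)]; push_cast; ring
  have e2 : ((2 * (2 * b + 1) * m - 1 - 1: ℕ) : ℤ) = 2 * (2 * b + 1) * m - 2 := by
    rw [Nat.sub_sub, Nat.cast_sub (by linarith)]; push_cast; ring
  have e4 : (((2 * b + 1 + 1) * m - 2: ℕ) : ℤ) = (2 * b + 2) * m - 2 := by
    rw [Nat.cast_sub (by linarith)]; push_cast; ring
  rw [e1, e2] at h
  rw [e4] at hs2
  have hε0 : (0 : ℤ) ≤ ε := by omega
  generalize hB : (b : ℤ) = B at *
  generalize hMm : (m : ℤ) = M at *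
  generalize hJ : (j : ℤ) = J at *
  generalize hLl : (l : ℤ) = L at *
  generalize hK : (k : ℤ) = K at *
  generalize hS : (s : ℤ) = S at *
  generalize hE : (ε : ℤ) = E at *
  have hB0 : 0 ≤ B := by omega
  have hJ0 : 0 ≤ J := by omega
  have hL0 : 0 ≤ L := by omega
  have hBM : 0 ≤ B * M := by positivity
  have hD : 0 < (2 * B + 1) * M - 1 := by linarith
  have key : J + L + 1 = ((2 * B + 1) * M - 1) * 2 * (2 * M * K - J - E) := by
    linarith [h]
  obtain ⟨u, hu⟩ : ∃ u, u = 2 * M * K - J - E := ⟨_, rfl⟩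
  rw [← hu] at key
  have u1 : 0 < u := by
    by_contra hc
    have h0 : 0 ≤ -u := by omega
    have := mul_nonneg hD.le h0
    linarith
  have u2 : u < 2 := by
    by_contra hc
    have h0 : 0 ≤ u - 2 := by omega
    have := mul_nonneg hD.le h0
    linarith
  have h1 : u = 1 := by omega
  rw [h1] at key hu
  have hd : 2 * M ∣ J + 1 + E - 2 * B * M := ⟨K - B, by linarith⟩
  have := Int.le_of_dvd (by linarith) hd
  linarith

theorem goodA {F : Type*} [Field F] (g : F) (hg0 : g ≠ 0) (q a m i s : ℕ)
    (haodd : Odd a) (ham : 2 ≤ a * m) (hm : 0 < m) (hq : q = 2 * a * m - 1)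
    (hg : orderOf g = 2 * a * m * (q - 1)) (hs2 : s ≤ (a + 1) * m - 2) :
    Good g q s (blkA q a m i) := by
  have ha : 0 < a := haodd.pos
  have hq1 : 1 ≤ q := by
    have : 2 * a * m = 2 * (a * m) := by ring
    omega
  obtain ⟨f, hf⟩ : ∃ f, f = 3 * a * m - m - 1 := ⟨_, rfl⟩
  have hfodd : ∃ c, f + 1 = 2 * c := by
    obtain ⟨b, rfl⟩ := haodd
    refine ⟨(3 * b + 1) * m, ?_⟩
    have h1 : 3 * (2 * b + 1) * m = 2 * ((3 * b + 1) * m) + m := by ring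
    have h2 : 0 < (3 * b + 1) * m := by positivity
    rw [hf, h1]
    omega
  obtain ⟨c, hc⟩ := hfodd
  refine ⟨fun k => g ^ (a * m * (i + k * f)), ?_, ?_⟩
  · intro k hk
    refine ⟨pow_ne_zero _ hg0, ?_⟩
    simp only [blkA, Finset.mem_image] at hk
    obtain ⟨t, -, rfl⟩ := hk
    have h1 : (g ^ (a * m * (i + (i + 2 * a * t) * f))) ^ (q - 1) = 1 := by
      rw [← pow_mul, ← orderOf_dvd_iff_pow_eq_one, hg]
      refine ⟨i * c + a * t * f, ?_⟩
      have : i + (i + 2 * a * t) * f = 2 * (i * c + a * t * f) := by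
        linear_combination i * hc
      rw [this]
      ring
    obtain ⟨r, rfl⟩ : ∃ r, q = r + 1 := ⟨q - 1, by omega⟩
    rw [pow_succ]
    rw [Nat.add_sub_cancel] at h1
    rw [h1, one_mul]
  · intro j hj l hl
    rw [blkA, Finset.sum_image]
    · have h1 : ∀ t, g ^ (a * m * (i + (i + 2 * a * t) * f)) * (g ^ (i + 2 * a * t)) ^ (q * j + l)
          = g ^ (a * m * i) * (g ^ (i + 2 * a * t)) ^ (q * j + l + a * m * f) := by
        intro t; ring
      simp only [h1]
      rw [← Finset.mul_sum, geo_sum g _ (2 * a) (m * (q - 1)) _ i hg (by ring) (by omega), mul_zero]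
      rintro ⟨k, hk⟩
      rw [hf, hq] at hk
      exact arithA a m j l s k haodd ham hm hs2 hj hl hk
    · intro x _ y _ hxy
      have : 2 * a * x = 2 * a * y := by simpa using hxy
      exact Nat.eq_of_mul_eq_mul_left (by omega) this

theorem goodB {F : Type*} [Field F] (g : F) (hg0 : g ≠ 0) (q a m i s : ℕ)
    (φ : F →+* F) (hφ : ∀ x, φ x = x ^ q) (hφφ : ∀ x : F, (x ^ q) ^ q = x)
    (haodd : Odd a) (ham : 2 ≤ a * m) (hm : 0 < m) (hq : q = 2 * a * m - 1)
    (hg : orderOf g = 2 * a * m * (q - 1)) (hs2 : s ≤ (a + 1) * m - 2) :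
    Good g q s (blkB q a m i) := by
  have ha : 0 < a := haodd.pos
  have hq1 : 3 ≤ q := by
    have : 2 * a * m = 2 * (a * m) := by ring
    omega
  obtain ⟨r, hr⟩ : ∃ r, q = r + 1 := ⟨q - 1, by omega⟩
  have hr1 : q - 1 = r := by omega
  have hinj : Function.Injective (fun t => i + a * t) := by
    intro x y hxy
    have : a * x = a * y := by simpa using hxy
    exact Nat.eq_of_mul_eq_mul_left (by omega) this
  have hneg : (g ^ (a * m)) ^ q = - g ^ (a * m) := by
    have h1 : ((g ^ (a * m)) ^ r) ^ 2 = 1 := by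
      rw [← pow_mul, ← pow_mul, ← orderOf_dvd_iff_pow_eq_one, hg, hr1]
      exact ⟨1, by ring⟩
    have h2 : (g ^ (a * m)) ^ r ≠ 1 := by
      intro h
      rw [← pow_mul, ← orderOf_dvd_iff_pow_eq_one, hg, hr1] at h
      have hpos : 0 < a * m * r := by
        have : 0 < r := by omega
        positivity
      have := Nat.le_of_dvd hpos h
      nlinarith
    rcases sq_eq_sq_iff_eq_or_eq_neg.mp (h1.trans (one_pow 2).symm) with h | h
    · exact absurd h h2
    · rw [hr, pow_succ, h]; ring
  have hz : ∀ t, g ^ (i + (i + a * t) * q) = g ^ (i * q + (i + a * t)) ↔ 2 * m ∣ t := by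
    intro t
    have h1 : i + (i + a * t) * q = (i * q + (i + a * t)) + a * t * r := by rw [hr]; ring
    rw [h1, pow_add, mul_eq_left₀ (pow_ne_zero _ hg0), ← orderOf_dvd_iff_pow_eq_one, hg, hr1]
    have h2 : 2 * a * m * r = (a * r) * (2 * m) := by ring
    have h3 : a * t * r = (a * r) * t := by ring
    have h4 : 0 < a * r := by
      have : 0 < r := by omega
      positivity
    rw [h2, h3]
    exact Nat.mul_dvd_mul_iff_left h4
  refine ⟨fun k => g ^ (a * m) * (g ^ (i + k * q) - g ^ (i * q + k)), ?_, ?_⟩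
  · intro k hk
    simp only [blkB, Finset.mem_image, Finset.mem_filter] at hk
    obtain ⟨t, ⟨-, ht⟩, rfl⟩ := hk
    refine ⟨mul_ne_zero (pow_ne_zero _ hg0) (sub_ne_zero.mpr (fun h => ht ((hz t).mp h))), ?_⟩
    generalize i + a * t = k
    have e1 : (g ^ (i + k * q)) ^ q = g ^ (i * q + k) := by
      rw [pow_add, mul_pow, pow_mul, hφφ, ← pow_mul, ← pow_add]
    have e2 : (g ^ (i * q + k)) ^ q = g ^ (i + k * q) := by
      rw [pow_add, mul_pow, pow_mul, hφφ, ← pow_mul, ← pow_add]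
    rw [mul_pow, hneg, ← hφ (_ - _), map_sub, hφ, hφ, e1, e2]
    ring
  · intro j hj l hl
    rw [blkB, Finset.sum_image (fun x _ y _ h => hinj h), Finset.sum_filter_of_ne]
    · have h1 : ∀ t, g ^ (a * m) * (g ^ (i + (i + a * t) * q) - g ^ (i * q + (i + a * t)))
            * (g ^ (i + a * t)) ^ (q * j + l)
          = g ^ (a * m + i) * (g ^ (i + a * t)) ^ (q * j + l + 1 + (q - 1) * 1)
            - g ^ (a * m + i * q) * (g ^ (i + a * t)) ^ (q * j + l + 1 + (q - 1) * 0) := by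
        intro t
        rw [hr1, hr]; ring
      simp only [h1]
      have hN : 2 * a * m * (q - 1) = a * (2 * m * (q - 1)) := by ring
      rw [Finset.sum_sub_distrib, ← Finset.mul_sum, ← Finset.mul_sum,
        geo_sum g _ a (2 * m * (q - 1)) _ i hg hN ha,
        geo_sum g _ a (2 * m * (q - 1)) _ i hg hN ha, mul_zero, mul_zero, sub_zero]
      · intro h
        rw [hq] at h
        exact arithB a m j l s 0 haodd ham hm hs2 hj hl (by omega) h
      · intro h
        rw [hq] at h
        exact arithB a m j l s 1 haodd ham hm hs2 hj hl (by omega) h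
    · intro t _ hne hdvd
      apply hne
      beta_reduce
      rw [(hz t).mpr hdvd, sub_self, mul_zero, zero_mul]

theorem card_blkA (q a m i : ℕ) (ha : 0 < a) : (blkA q a m i).card = m * (q - 1) := by
  rw [blkA, Finset.card_image_of_injective, Finset.card_range]
  intro x y hxy
  have : 2 * a * x = 2 * a * y := by simpa using hxy
  exact Nat.eq_of_mul_eq_mul_left (by omega) this

theorem card_blkB (q a m i : ℕ) (ha : 0 < a) (hm : 0 < m) :
    (blkB q a m i).card = (2 * m - 1) * (q - 1) := by
  rw [blkB, Finset.card_image_of_injective]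
  · have h1 := Finset.card_filter_add_card_filter_not (s := Finset.range (2 * m * (q - 1)))
      (fun t => 2 * m ∣ t)
    have h2 : ((Finset.range (2 * m * (q - 1))).filter (fun t => 2 * m ∣ t)).card = q - 1 := by
      have : (Finset.range (2 * m * (q - 1))).filter (fun t => 2 * m ∣ t)
          = (Finset.range (q - 1)).image (fun t => 2 * m * t) := by
        ext t
        simp only [Finset.mem_filter, Finset.mem_range, Finset.mem_image]
        constructor
        · rintro ⟨h, c, rfl⟩
          exact ⟨c, Nat.lt_of_mul_lt_mul_left h, rfl⟩
        · rintro ⟨c, hc, rfl⟩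
          exact ⟨Nat.mul_lt_mul_of_pos_left hc (by omega), Dvd.intro _ rfl⟩
      rw [this, Finset.card_image_of_injective, Finset.card_range]
      intro x y hxy
      exact Nat.eq_of_mul_eq_mul_left (show 0 < 2 * m by omega) hxy
    rw [h2, Finset.card_range] at h1
    rw [Nat.sub_mul, one_mul]
    omega
  · intro x y hxy
    have : a * x = a * y := by simpa using hxy
    exact Nat.eq_of_mul_eq_mul_left ha this

theorem mem_blkA {q a m i k : ℕ} (hi : i < 2 * a) (hk : k ∈ blkA q a m i) :
    k % (2 * a) = i ∧ k < 2 * a * m * (q - 1) := by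
  simp only [blkA, Finset.mem_image, Finset.mem_range] at hk
  obtain ⟨t, ht, rfl⟩ := hk
  refine ⟨by rw [Nat.add_mul_mod_self_left, Nat.mod_eq_of_lt hi], ?_⟩
  have := Nat.mul_le_mul_left (2 * a) (show t + 1 ≤ m * (q - 1) from ht)
  have e : 2 * a * (m * (q - 1)) = 2 * a * m * (q - 1) := by ring
  rw [e] at this
  linarith

theorem mem_blkB {q a m i k : ℕ} (hi : i < a) (hk : k ∈ blkB q a m i) :
    k % a = i ∧ k < 2 * a * m * (q - 1) := by
  simp only [blkB, Finset.mem_image, Finset.mem_filter, Finset.mem_range] at hk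
  obtain ⟨t, ⟨ht, -⟩, rfl⟩ := hk
  refine ⟨by rw [Nat.add_mul_mod_self_left, Nat.mod_eq_of_lt hi], ?_⟩
  have := Nat.mul_le_mul_left a (show t + 1 ≤ 2 * m * (q - 1) from ht)
  have e : a * (2 * m * (q - 1)) = 2 * a * m * (q - 1) := by ring
  rw [e] at this
  linarith

theorem final_of_good {F : Type*} [Field F] [Fintype F] (q n s : ℕ) (hpp : IsPrimePow q)
    (hF : Fintype.card F = q ^ 2) (hs : s < n) (g : Fˣ)
    (hgen : ∀ x, x ∈ Subgroup.zpowers g) (hg : orderOf (g : F) = (q + 1) * (q - 1))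
    (hq1 : 0 < q - 1)
    (I : Finset ℕ) (hI : Good (g : F) q s I) (hlt : ∀ k ∈ I, k < (q + 1) * (q - 1))
    (hn : I.card = n) :
    ∃ C : Submodule F (Fin n → F), dualH q n C ≤ C ∧ Module.finrank F C = n - s ∧
      IsLeast {d : ℕ | ∃ x ∈ C, x ≠ 0 ∧ wt x = d} (s + 1) := by
  obtain ⟨W, hW, hWs⟩ := hI
  have hroot : ∀ w : F, w ≠ 0 → w ^ q = w → ∃ v : F, v ≠ 0 ∧ v ^ (q + 1) = w := by
    intro w hw0 hwq
    obtain ⟨k, hk⟩ := (mem_powers_iff_mem_zpowers (x := g) (y := Units.mk0 w hw0)).mpr (hgen _)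
    have hk' : (g : F) ^ k = w := by
      have := congrArg Units.val hk
      simpa using this
    have h1 : w ^ (q - 1) = 1 := by
      have h2 : w ^ (q - 1) * w = 1 * w := by
        rw [← pow_succ, Nat.sub_add_cancel (by omega), hwq, one_mul]
      exact mul_right_cancel₀ hw0 h2
    rw [← hk', ← pow_mul, ← orderOf_dvd_iff_pow_eq_one, hg] at h1
    obtain ⟨c, rfl⟩ := Nat.dvd_of_mul_dvd_mul_right hq1 h1
    exact ⟨(g : F) ^ c, pow_ne_zero _ g.ne_zero, by rw [← hk']; ring⟩
  have hmem : ∀ x : Fin n, I.orderEmbOfFin hn x ∈ I := fun x => Finset.orderEmbOfFin_mem I hn x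
  choose v hv0 hv using fun x : Fin n =>
    hroot (W (I.orderEmbOfFin hn x)) (hW _ (hmem x)).1 (hW _ (hmem x)).2
  refine code_exists q n s hpp hF hs (fun x => (g : F) ^ (I.orderEmbOfFin hn x)) v ?_ hv0 ?_
  · intro x y hxy
    have h1 := pow_injOn_Iio_orderOf (x := (g : F)) (by simpa [hg] using hlt _ (hmem x))
      (by simpa [hg] using hlt _ (hmem y)) hxy
    exact (I.orderEmbOfFin hn).injective h1
  · intro j hj l hl
    have h1 := hWs j hj l hl
    rw [← Finset.map_orderEmbOfFin_univ I hn, Finset.sum_map] at h1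
    rw [← h1]
    exact Finset.sum_congr rfl fun x _ => by rw [hv]; rfl

/-- case q = 2am−1 with a odd:
there exists an [n, n−s, s+1]_{q²} Hermitian dual-containing code with
n = (c₂+c₃)(q²−1)/(2a) + c₁((q²−1)/a − q + 1), for c₁,c₂,c₃ ≥ 0 with
c₁+c₂ ≤ a, c₁+c₃ ≤ a, c₁+c₂+c₃ ≥ 1, and 1 ≤ s ≤ (a+1)m − 2. -/
theorem stmt_10 (q a m : ℕ) (ha : 0 < a) (haodd : Odd a) (hm : 0 < m)
    (hq : q = 2 * a * m - 1) (hodd : Odd q) (hpp : IsPrimePow q)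
    (F : Type*) [Field F] [Fintype F] (hF : Fintype.card F = q ^ 2)
    (c₁ c₂ c₃ s : ℕ) (h12 : c₁ + c₂ ≤ a) (h13 : c₁ + c₃ ≤ a)
    (h123 : 1 ≤ c₁ + c₂ + c₃) (hs1 : 1 ≤ s) (hs2 : s ≤ (a + 1) * m - 2) :
    ∃ C : Submodule F (Fin ((c₂ + c₃) * (q ^ 2 - 1) / (2 * a) + c₁ * ((q ^ 2 - 1) / a - q + 1)) → F),
      dualH q ((c₂ + c₃) * (q ^ 2 - 1) / (2 * a) + c₁ * ((q ^ 2 - 1) / a - q + 1)) C ≤ C ∧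
      Module.finrank F C = ((c₂ + c₃) * (q ^ 2 - 1) / (2 * a) + c₁ * ((q ^ 2 - 1) / a - q + 1)) - s ∧
      IsLeast {d : ℕ | ∃ x ∈ C, x ≠ 0 ∧ wt x = d} (s + 1) := by
  classical
  have hq3 : 3 ≤ q := by
    have := hpp.one_lt
    obtain ⟨b, hb⟩ := hodd
    omega
  have e0 : 2 * a * m = 2 * (a * m) := by ring
  have ham : 2 ≤ a * m := by omega
  have hqq : 2 * a * m = q + 1 := by omega
  have hN : q ^ 2 - 1 = 2 * a * m * (q - 1) := by
    rw [hqq]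
    have := Nat.sq_sub_sq q 1
    simpa using this
  have hn : (c₂ + c₃) * (q ^ 2 - 1) / (2 * a) + c₁ * ((q ^ 2 - 1) / a - q + 1)
      = (c₂ + c₃) * (m * (q - 1)) + c₁ * ((2 * m - 1) * (q - 1)) := by
    have h1 : (c₂ + c₃) * (q ^ 2 - 1) / (2 * a) = (c₂ + c₃) * (m * (q - 1)) := by
      rw [hN]
      apply Nat.div_eq_of_eq_mul_right (by omega)
      ring
    have h2 : (q ^ 2 - 1) / a = 2 * m * (q - 1) := by
      rw [hN]
      apply Nat.div_eq_of_eq_mul_right (by omega)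
      ring
    have h3 : 2 * m * (q - 1) - q + 1 = (2 * m - 1) * (q - 1) := by
      rw [Nat.sub_mul, one_mul]
      have : 2 * (q - 1) ≤ 2 * m * (q - 1) := Nat.mul_le_mul_right _ (by omega)
      omega
    rw [h1, h2, h3]
  rw [hn]
  obtain ⟨φ, hφ⟩ := exists_frob (F := F) q hpp hF
  have hφφ : ∀ x : F, (x ^ q) ^ q = x := by
    intro x
    rw [← pow_mul, ← sq, ← hF]
    exact FiniteField.pow_card x
  obtain ⟨g, hgen⟩ := IsCyclic.exists_generator (α := Fˣ)
  have hg : orderOf (g : F) = 2 * a * m * (q - 1) := by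
    rw [orderOf_units, orderOf_eq_card_of_forall_mem_zpowers hgen, Nat.card_eq_fintype_card,
      Fintype.card_units, hF, hN]
  have hs : s < (c₂ + c₃) * (m * (q - 1)) + c₁ * ((2 * m - 1) * (q - 1)) := by
    have hmm : m ≤ 2 * m - 1 := by omega
    have h1 : m * (q - 1) ≤ (2 * m - 1) * (q - 1) := Nat.mul_le_mul_right _ hmm
    have h2 : c₁ * (m * (q - 1)) ≤ c₁ * ((2 * m - 1) * (q - 1)) := Nat.mul_le_mul_left _ h1
    have h3 : 1 * (m * (q - 1)) ≤ (c₁ + c₂ + c₃) * (m * (q - 1)) := Nat.mul_le_mul_right _ h123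
    have h4 : (c₁ + c₂ + c₃) * (m * (q - 1))
      = (c₂ + c₃) * (m * (q - 1)) + c₁ * (m * (q - 1)) := by ring
    have h5 : (a + 1) * m ≤ m * (q - 1) + 1 := by
      have h6 : q - 1 = 2 * (a * m) - 2 := by omega
      rw [h6]
      obtain ⟨d, hd⟩ : ∃ d, a * m = d + 2 := ⟨a * m - 2, by omega⟩
      have h7 : (a + 1) * m = d + 2 + m := by rw [add_mul, hd]; ring
      have h8 : 2 * (a * m) - 2 = 2 * d + 2 := by omega
      rw [h7, h8]
      nlinarith [Nat.zero_le d, Nat.mul_le_mul_left d hm]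
    omega
  have hAlt : ∀ i ∈ Finset.Ico c₁ (c₁ + c₂) ∪ Finset.Ico (a + c₁) (a + c₁ + c₃),
      i < 2 * a ∧ c₁ ≤ i % a := by
    intro i hi
    rw [Finset.mem_union, Finset.mem_Ico, Finset.mem_Ico] at hi
    rcases hi with hi | hi
    · rw [Nat.mod_eq_of_lt (by omega)]
      omega
    · obtain ⟨d, rfl⟩ : ∃ d, i = a + d := ⟨i - a, by omega⟩
      rw [Nat.add_mod_left, Nat.mod_eq_of_lt (by omega)]
      omega
  have hAd : ∀ i ∈ Finset.Ico c₁ (c₁ + c₂) ∪ Finset.Ico (a + c₁) (a + c₁ + c₃),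
      ∀ j ∈ Finset.Ico c₁ (c₁ + c₂) ∪ Finset.Ico (a + c₁) (a + c₁ + c₃), i ≠ j →
      Disjoint (blkA q a m i) (blkA q a m j) := by
    intro i hi j hj hij
    rw [Finset.disjoint_left]
    intro k h1 h2
    exact hij ((mem_blkA (hAlt i hi).1 h1).1.symm.trans (mem_blkA (hAlt j hj).1 h2).1)
  have hBd : ∀ i ∈ Finset.range c₁, ∀ j ∈ Finset.range c₁, i ≠ j →
      Disjoint (blkB q a m i) (blkB q a m j) := by
    intro i hi j hj hij
    rw [Finset.mem_range] at hi hj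
    rw [Finset.disjoint_left]
    intro k h1 h2
    exact hij ((mem_blkB (by omega) h1).1.symm.trans (mem_blkB (by omega) h2).1)
  have hABd : Disjoint
      ((Finset.Ico c₁ (c₁ + c₂) ∪ Finset.Ico (a + c₁) (a + c₁ + c₃)).biUnion (blkA q a m))
      ((Finset.range c₁).biUnion (blkB q a m)) := by
    rw [Finset.disjoint_left]
    intro k h1 h2
    rw [Finset.mem_biUnion] at h1 h2
    obtain ⟨i, hi, h1⟩ := h1
    obtain ⟨j, hj, h2⟩ := h2
    rw [Finset.mem_range] at hj
    have e1 := (mem_blkA (hAlt i hi).1 h1).1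
    have e2 := (mem_blkB (by omega) h2).1
    have e3 := (hAlt i hi).2
    rw [← e1, Nat.mod_mod_of_dvd _ (Dvd.intro_left 2 rfl), e2] at e3
    omega
  refine final_of_good q _ s hpp hF hs g hgen (by rw [hg, hqq]) (by omega)
    ((Finset.Ico c₁ (c₁ + c₂) ∪ Finset.Ico (a + c₁) (a + c₁ + c₃)).biUnion (blkA q a m) ∪
      (Finset.range c₁).biUnion (blkB q a m)) ?_ ?_ ?_
  · refine Good.union (Good.biUnion _ _ ?_ hAd) (Good.biUnion _ _ ?_ hBd) hABd
    · intro i _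
      exact goodA _ g.ne_zero q a m i s haodd ham hm hq hg hs2
    · intro i _
      exact goodB _ g.ne_zero q a m i s φ hφ hφφ haodd ham hm hq hg hs2
  · intro k hk
    rw [← hqq]
    rw [Finset.mem_union, Finset.mem_biUnion, Finset.mem_biUnion] at hk
    rcases hk with ⟨i, hi, hk⟩ | ⟨i, hi, hk⟩
    · exact (mem_blkA (hAlt i hi).1 hk).2
    · rw [Finset.mem_range] at hi
      exact (mem_blkB (by omega) hk).2
  · have hdis : Disjoint (Finset.Ico c₁ (c₁ + c₂)) (Finset.Ico (a + c₁) (a + c₁ + c₃)) := by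
      rw [Finset.disjoint_left]
      intro x hx hy
      rw [Finset.mem_Ico] at hx hy
      omega
    rw [Finset.card_union_of_disjoint hABd, Finset.card_biUnion hAd, Finset.card_biUnion hBd]
    simp only [card_blkA _ _ _ _ ha, card_blkB _ _ _ _ ha hm, Finset.sum_const, smul_eq_mul,
      Finset.card_range]
    rw [Finset.card_union_of_disjoint hdis, Nat.card_Ico, Nat.card_Ico]
    congr 2
    omega
end

section
/- Let q be an odd prime power of the form q = 2ab + 1, where a, b are odd positive integers with gcd(a,b) = 1. Let c be an integer with 1 ≤ c ≤ 2(a+b−1), and set c_1 = c if 1 ≤ c ≤ a+b−1 and c_1 = ⌊c/2⌋ if a+b ≤ c ≤ 2(a+b−1). Then for every integer s with 1 ≤ s ≤ ab + c_1, there exists a linear code C over 𝔽_{q²} of length n = c(q+1), dimension n − s, and minimum distance s + 1, such that C^{⊥H} ⊆ C. -/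
/-- The parity check map of a generalized Reed-Solomon type code. -/
noncomputable def pcMap {F : Type*} [Field F] {n : ℕ} (s : ℕ) (u b : Fin n → F) :
    (Fin n → F) →ₗ[F] (Fin s → F) where
  toFun x := fun j => ∑ i, x i * (u i * b i ^ (j : ℕ))
  map_add' x y := by
    funext j
    simp [add_mul, Finset.sum_add_distrib]
  map_smul' r x := by
    funext j
    simp [mul_assoc, Finset.mul_sum]

theorem pcMap_apply {F : Type*} [Field F] {n : ℕ} (s : ℕ) (u b x : Fin n → F) (j : Fin s) :
    pcMap s u b x j = ∑ i, x i * (u i * b i ^ (j : ℕ)) := rfl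

theorem pcMap_eq_zero {F : Type*} [Field F] {n : ℕ} (s : ℕ) (u b x : Fin n → F)
    (hb : Function.Injective b) (hu : ∀ i, u i ≠ 0) (hx : pcMap s u b x = 0)
    (T : Finset (Fin n)) (hT : T.card ≤ s) (hxT : ∀ i, i ∉ T → x i = 0) : x = 0 := by
  classical
  funext i0
  by_cases hi0 : i0 ∈ T
  swap
  · exact hxT i0 hi0
  set f : Polynomial F := ∏ i ∈ T.erase i0, (Polynomial.X - Polynomial.C (b i)) with hf
  have hdeg : f.natDegree < s := by
    have h1 : f.natDegree = (T.erase i0).card := by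
      rw [hf, Polynomial.natDegree_finsetProd_X_sub_C_eq_card]
    rw [h1]
    exact lt_of_lt_of_le (Finset.card_erase_lt_of_mem hi0) hT
  have h0 : ∑ i, x i * (u i * f.eval (b i)) = 0 := by
    have : ∀ i, x i * (u i * f.eval (b i)) =
        ∑ j ∈ Finset.range s, f.coeff j * (x i * (u i * b i ^ j)) := by
      intro i
      rw [Polynomial.eval_eq_sum_range' hdeg, Finset.mul_sum, Finset.mul_sum]
      exact Finset.sum_congr rfl fun j _ => by ring
    simp_rw [this]
    rw [Finset.sum_comm]
    refine Finset.sum_eq_zero fun j hj => ?_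
    rw [← Finset.mul_sum]
    have := congrFun hx ⟨j, Finset.mem_range.1 hj⟩
    rw [pcMap_apply] at this
    simp only [Pi.zero_apply] at this
    rw [this, mul_zero]
  rw [Finset.sum_eq_single i0] at h0
  · have hne : f.eval (b i0) ≠ 0 := by
      rw [hf, Polynomial.eval_prod, Finset.prod_ne_zero_iff]
      intro i hi
      have := Finset.ne_of_mem_erase hi
      simp only [Polynomial.eval_sub, Polynomial.eval_X, Polynomial.eval_C]
      exact sub_ne_zero.2 fun h => this (hb h).symm
    simpa [hu i0, hne] using h0
  · intro i _ hi
    by_cases hiT : i ∈ T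
    · have : f.eval (b i) = 0 := by
        rw [hf, Polynomial.eval_prod]
        exact Finset.prod_eq_zero (Finset.mem_erase.2 ⟨hi, hiT⟩) (by simp)
      simp [this]
    · simp [hxT i hiT]
  · simp

/-- Extension by zero. -/
noncomputable def extMap (F : Type*) [Field F] {m n : ℕ} (_h : m ≤ n) :
    (Fin m → F) →ₗ[F] (Fin n → F) where
  toFun x := fun i => if hi : (i : ℕ) < m then x ⟨i, hi⟩ else 0
  map_add' x y := by
    funext j
    by_cases hj : (j : ℕ) < m <;> simp [hj]
  map_smul' r x := by
    funext j
    by_cases hj : (j : ℕ) < m <;> simp [hj]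

theorem extMap_inj (F : Type*) [Field F] {m n : ℕ} (h : m ≤ n) :
    Function.Injective (extMap F h) := by
  intro x y hxy
  funext i
  have := congrFun hxy ⟨i, lt_of_lt_of_le i.2 h⟩
  simpa [extMap] using this

theorem card_low {m n : ℕ} (h : m ≤ n) :
    (Finset.univ.filter fun i : Fin n => (i : ℕ) < m).card = m := by
  have : (Finset.univ.filter fun i : Fin n => (i : ℕ) < m) =
      (Finset.univ : Finset (Fin m)).map (Fin.castLEEmb h) := by
    ext i
    simp only [Finset.mem_filter, Finset.mem_univ, true_and, Finset.mem_map]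
    constructor
    · intro hi
      exact ⟨⟨i, hi⟩, rfl⟩
    · rintro ⟨j, rfl⟩
      exact j.2
  rw [this]
  simp

theorem grs_code {F : Type*} [Field F] [Fintype F] (q n s : ℕ) (hF : Fintype.card F = q ^ 2)
    (φ : F →+* F) (hφ : ∀ x, φ x = x ^ q) (hsn : s < n)
    (b u : Fin n → F) (hb : Function.Injective b) (hu : ∀ i, u i ≠ 0)
    (hsum : ∀ j l : ℕ, j < s → l < s → ∑ i, u i ^ (q + 1) * b i ^ (q * j + l) = 0) :
    ∃ C : Submodule F (Fin n → F),
      dualH q n C ≤ C ∧ Module.finrank F C = n - s ∧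
      IsLeast {d : ℕ | ∃ x ∈ C, x ≠ 0 ∧ wt x = d} (s + 1) := by
  classical
  have hφφ : ∀ x, φ (φ x) = x := by
    intro x
    rw [hφ, hφ, ← pow_mul, ← sq, ← hF, FiniteField.pow_card]
  have hwt : ∀ x : Fin n → F, wt x = (Finset.univ.filter fun i => x i ≠ 0).card := by
    intro x
    rw [wt, ← Set.ncard_coe_finset]
    congr 1
    ext i
    simp
  have hmin : ∀ x : Fin n → F, pcMap s u b x = 0 → x ≠ 0 → s + 1 ≤ wt x := by
    intro x hx hx0
    by_contra hlt
    apply hx0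
    refine pcMap_eq_zero s u b x hb hu hx (Finset.univ.filter fun i => x i ≠ 0) ?_ ?_
    · rw [← hwt]; omega
    · intro i hi
      simpa using hi
  have hlow : ∀ (m : ℕ) (h : m ≤ n) (y : Fin m → F), wt (extMap F h y) ≤ m := by
    intro m h y
    rw [hwt]
    refine le_trans (Finset.card_le_card ?_) (card_low h).le
    intro i hi
    simp only [Finset.mem_filter, Finset.mem_univ, true_and] at hi ⊢
    by_contra hlt
    exact hi (by simp [extMap, hlt])
  have hsurj : Function.Surjective (pcMap s u b) := by
    have hinj : Function.Injective ((pcMap s u b) ∘ₗ (extMap F hsn.le)) := by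
      rw [← LinearMap.ker_eq_bot, LinearMap.ker_eq_bot']
      intro y hy
      by_contra hy0
      have h1 := hmin (extMap F hsn.le y) hy
        (fun h => hy0 (extMap_inj F hsn.le (by rw [h, map_zero])))
      have h2 := hlow s hsn.le y
      omega
    have h3 := (LinearMap.injective_iff_surjective_of_finrank_eq_finrank rfl).1 hinj
    exact Function.Surjective.of_comp h3
  refine ⟨LinearMap.ker (pcMap s u b), ?_, ?_, ?_, ?_⟩
  · intro x hx
    have hx' : ∀ y, pcMap s u b y = 0 → ∑ i, x i * y i ^ q = 0 := fun y hy => hx y hy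
    -- the functional y ↦ ∑ φ (x i) * y i
    let f : Module.Dual F (Fin n → F) := ∑ i, φ (x i) • LinearMap.proj i
    have hf : ∀ y, f y = ∑ i, φ (x i) * y i := by
      intro y
      simp [f]
    have hmem : f ∈ (LinearMap.ker (pcMap s u b)).dualAnnihilator := by
      rw [Submodule.mem_dualAnnihilator]
      intro y hy
      have h1 := congrArg φ (hx' y hy)
      rw [map_sum, map_zero] at h1
      rw [hf, ← h1]
      refine Finset.sum_congr rfl fun i _ => ?_
      rw [map_mul, ← hφ, hφφ]
    rw [← LinearMap.range_dualMap_eq_dualAnnihilator_ker] at hmem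
    obtain ⟨d, hd⟩ := hmem
    have hxi : ∀ i, φ (x i) = ∑ j : Fin s, (u i * b i ^ (j : ℕ)) * d (Pi.single j 1) := by
      intro i
      have h1 : f (Pi.single i 1) = φ (x i) := by
        rw [hf, Finset.sum_eq_single i] <;> simp +contextual
      rw [← h1, ← hd, LinearMap.dualMap_apply, LinearMap.pi_apply_eq_sum_univ d]
      refine Finset.sum_congr rfl fun j _ => ?_
      have h2 : pcMap s u b (Pi.single i 1) j = u i * b i ^ (j : ℕ) := by
        rw [pcMap_apply, Finset.sum_eq_single i] <;> simp +contextual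
      have h3 : (fun k : Fin s => if j = k then (1 : F) else 0) = Pi.single j 1 := by
        funext k
        simp [Pi.single_apply, eq_comm]
      rw [h2, h3, smul_eq_mul]
    have hxi' : ∀ i, x i = ∑ j : Fin s, u i ^ q * b i ^ (q * (j : ℕ)) * φ (d (Pi.single j 1)) := by
      intro i
      rw [← hφφ (x i), hxi, map_sum]
      refine Finset.sum_congr rfl fun j _ => ?_
      rw [map_mul, map_mul, map_pow, hφ (u i), hφ (b i), ← pow_mul]
    rw [LinearMap.mem_ker]
    funext l
    rw [pcMap_apply, Pi.zero_apply]
    have : ∀ i, x i * (u i * b i ^ (l : ℕ)) =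
        ∑ j : Fin s, φ (d (Pi.single j 1)) * (u i ^ (q + 1) * b i ^ (q * j + l)) := by
      intro i
      rw [hxi', Finset.sum_mul]
      refine Finset.sum_congr rfl fun j _ => ?_
      ring
    simp_rw [this]
    rw [Finset.sum_comm]
    refine Finset.sum_eq_zero fun j _ => ?_
    rw [← Finset.mul_sum, hsum j l j.2 l.2, mul_zero]
  · have h1 := LinearMap.finrank_range_add_finrank_ker (pcMap s u b)
    rw [LinearMap.range_eq_top.2 hsurj, finrank_top] at h1
    simp only [Module.finrank_fin_fun] at h1
    omega
  · have hker : LinearMap.ker ((pcMap s u b) ∘ₗ (extMap F (Nat.succ_le_of_lt hsn))) ≠ ⊥ :=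
      LinearMap.ker_ne_bot_of_finrank_lt (by simp)
    obtain ⟨y, hy, hy0⟩ := Submodule.exists_mem_ne_zero_of_ne_bot hker
    have hne : extMap F (Nat.succ_le_of_lt hsn) y ≠ 0 :=
      fun h => hy0 (extMap_inj F _ (by rw [h, map_zero]))
    exact ⟨_, hy, hne, le_antisymm (hlow _ _ y) (hmin _ hy hne)⟩
  · rintro d ⟨x, hx, hx0, rfl⟩
    exact hmin x hx hx0

theorem lagrange_sum {F ι : Type*} [Field F] [DecidableEq ι] (S : Finset ι) (v : ι → F)
    (hv : Set.InjOn v S) (m : ℕ) (hm : m + 1 < S.card) :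
    ∑ i ∈ S, v i ^ m / ∏ j ∈ S.erase i, (v i - v j) = 0 := by
  have h := Lagrange.coeff_eq_sum (s := S) (v := v) hv (P := Polynomial.X ^ m)
    (by rw [Polynomial.degree_X_pow]; exact_mod_cast by omega)
  rw [Polynomial.coeff_X_pow, if_neg (by omega)] at h
  simpa using h.symm

theorem key_code {F : Type*} [Field F] [Fintype F] (q r c c1 s : ℕ) (hr : 0 < r)
    (hq : q = 2 * r + 1) (hF : Fintype.card F = q ^ 2)
    (φ : F →+* F) (hφ : ∀ x, φ x = x ^ q)
    (κ : Fin c → ℕ) (hκ : Function.Injective κ) (hκlt : ∀ i, κ i < 2 * r)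
    (hcard : ∀ e < 2, (Finset.univ.filter fun i => κ i % 2 = e).card = 0 ∨
      c1 ≤ (Finset.univ.filter fun i => κ i % 2 = e).card)
    (hc : 0 < c) (hc1 : c1 ≤ r) (hc1c : c1 ≤ c) (hs : s ≤ r + c1) :
    ∃ C : Submodule F (Fin (c * (q + 1)) → F),
      dualH q (c * (q + 1)) C ≤ C ∧ Module.finrank F C = c * (q + 1) - s ∧
      IsLeast {d : ℕ | ∃ x ∈ C, x ≠ 0 ∧ wt x = d} (s + 1) := by
  classical
  obtain ⟨g, hg⟩ : ∃ g : F, IsPrimitiveRoot g (4 * r * (r + 1)) := by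
    obtain ⟨g, hg⟩ := IsCyclic.exists_ofOrder_eq_natCard (α := Fˣ)
    have h1 : Nat.card Fˣ = 4 * r * (r + 1) := by
      rw [Nat.card_eq_fintype_card, Fintype.card_units, hF, hq]
      have : (2 * r + 1) ^ 2 = 4 * r * (r + 1) + 1 := by ring
      omega
    rw [h1] at hg
    exact ⟨g, by rw [IsPrimitiveRoot.coe_units_iff, ← hg]; exact IsPrimitiveRoot.orderOf g⟩
  have hN : 0 < 4 * r * (r + 1) := by positivity
  have hg0 : g ≠ 0 := hg.ne_zero hN.ne'
  have hneg : g ^ (2 * r * (r + 1)) = -1 := by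
    have h1 : (g ^ (2 * r * (r + 1))) ^ 2 = 1 := by
      rw [← pow_mul, hg.pow_eq_one_iff_dvd]
      exact ⟨1, by ring⟩
    rcases (sq_eq_sq_iff_eq_or_eq_neg.1 (h1.trans (one_pow 2).symm)) with h | h
    · exfalso
      rw [hg.pow_eq_one_iff_dvd] at h
      have := Nat.le_of_dvd (by positivity) h
      nlinarith
    · exact h
  have hneg1 : (-1 : F) ≠ 1 := by
    rw [← hneg]
    intro h
    rw [hg.pow_eq_one_iff_dvd] at h
    have := Nat.le_of_dvd (by positivity) h
    nlinarith
  obtain ⟨θ, hθ⟩ : ∃ θ, θ = g ^ (2 * (r + 1)) := ⟨_, rfl⟩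
  obtain ⟨ζ, hζ⟩ : ∃ ζ, ζ = g ^ (2 * r) := ⟨_, rfl⟩
  have hθ0 : θ ≠ 0 := by rw [hθ]; exact pow_ne_zero _ hg0
  have hθprim : IsPrimitiveRoot θ (2 * r) := by
    rw [hθ]; exact hg.pow hN (by ring)
  have hθr : θ ^ r = -1 := by rw [hθ, ← pow_mul, ← hneg]; congr 1; ring
  have hζ1 : ζ ^ (q + 1) = 1 := by
    rw [hζ, hq, ← pow_mul, hg.pow_eq_one_iff_dvd]; exact ⟨1, by ring⟩
  have hφθ : φ θ = θ := by
    rw [hφ, hq, pow_succ, hθprim.pow_eq_one, one_mul]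
  have hv : Function.Injective fun i => θ ^ κ i := by
    intro i j h
    exact hκ (hθprim.pow_inj (hκlt i) (hκlt j) h)
  -- parity classes
  obtain ⟨S, hS⟩ : ∃ S : ℕ → Finset (Fin c), S = fun e => Finset.univ.filter fun i => κ i % 2 = e :=
    ⟨_, rfl⟩
  obtain ⟨P, hP⟩ : ∃ P : Fin c → F, P = fun i =>
      ∏ j ∈ (S (κ i % 2)).erase i, (θ ^ κ i - θ ^ κ j) := ⟨_, rfl⟩
  have hP0 : ∀ i, P i ≠ 0 := by
    intro i
    rw [hP]
    refine Finset.prod_ne_zero_iff.2 fun j hj => ?_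
    exact sub_ne_zero.2 fun h => Finset.ne_of_mem_erase hj (hv h).symm
  have hφP : ∀ i, φ (P i) = P i := by
    intro i
    rw [hP]
    simp [map_prod, hφθ]
  obtain ⟨ν, hν⟩ : ∃ ν : Fin c → F, ν = fun i => (θ ^ (κ i / 2) * P i)⁻¹ := ⟨_, rfl⟩
  have hν0 : ∀ i, ν i ≠ 0 := by
    intro i
    rw [hν]
    exact inv_ne_zero (mul_ne_zero (pow_ne_zero _ hθ0) (hP0 i))
  have hφν : ∀ i, φ (ν i) = ν i := by
    intro i
    rw [hν]
    simp [hφP, hφθ]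
  -- vanishing on each parity class
  have hvan : ∀ e < 2, ∀ m, m + 1 < c1 → ∑ i ∈ S e, (θ ^ κ i) ^ m / P i = 0 := by
    intro e he m hm
    have hce := hcard e he
    have hcS : (S e).card = 0 ∨ c1 ≤ (S e).card := by rw [hS]; exact hce
    rcases hcS with h | h
    · rw [Finset.card_eq_zero] at h
      rw [h, Finset.sum_empty]
    · rw [← lagrange_sum (S e) (fun i => θ ^ κ i) hv.injOn m (by omega)]
      refine Finset.sum_congr rfl fun i hi => ?_
      have : κ i % 2 = e := by
        rw [hS] at hi
        simpa using hi
      rw [hP]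
      simp only [this]
  have hsplit : ∀ f : Fin c → F, ∑ i, f i = ∑ i ∈ S 0, f i + ∑ i ∈ S 1, f i := by
    intro f
    have h1 : S 1 = Finset.univ.filter fun i => ¬ κ i % 2 = 0 := by
      rw [hS]
      ext i
      simp
    have h0 : S 0 = Finset.univ.filter fun i => κ i % 2 = 0 := by rw [hS]
    rw [h0, h1, Finset.sum_filter_add_sum_filter_not]
  have hpar : ∀ e, ∀ i ∈ S e, κ i = 2 * (κ i / 2) + e := by
    intro e i hi
    rw [hS] at hi
    simp only [Finset.mem_filter] at hi
    omega
  -- the outer sums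
  have houter : ∀ m, m + 1 < c1 → ∀ e < 2, ∀ t : ℕ, (t = m ∨ t = m + r) →
      ∑ i ∈ S e, ν i * g ^ (κ i * ((r + 1) + 2 * (r + 1) * t)) = 0 := by
    intro m hm e he t ht
    obtain ⟨ε, hε⟩ : ∃ ε : F, ∀ i ∈ S e, θ ^ (κ i * t) = ε * (θ ^ κ i) ^ m := by
      rcases ht with rfl | rfl
      · exact ⟨1, fun i _ => by rw [one_mul, pow_mul]⟩
      · refine ⟨(-1) ^ e, fun i hi => ?_⟩
        rw [mul_add, pow_add, pow_mul, mul_comm (κ i) r, pow_mul, hθr]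
        have : (-1 : F) ^ κ i = (-1) ^ e := by
          conv_lhs => rw [hpar e i hi]
          rw [pow_add, pow_mul]
          simp
        rw [this, mul_comm]
    have : ∀ i ∈ S e, ν i * g ^ (κ i * ((r + 1) + 2 * (r + 1) * t)) =
        (g ^ (e * (r + 1)) * ε) * ((θ ^ κ i) ^ m / P i) := by
      intro i hi
      have h1 : g ^ (κ i * ((r + 1) + 2 * (r + 1) * t)) =
          θ ^ (κ i / 2) * g ^ (e * (r + 1)) * θ ^ (κ i * t) := by
        rw [hθ, ← pow_mul, ← pow_mul, ← pow_add, ← pow_add]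
        congr 1
        have := hpar e i hi
        generalize κ i / 2 = k at *
        rw [this]
        ring
      rw [h1, hε i hi, hν]
      have := hP0 i
      have := pow_ne_zero (κ i / 2) hθ0
      field_simp
    rw [Finset.sum_congr rfl this, ← Finset.mul_sum, hvan e he m hm, mul_zero]
  -- norm surjectivity
  have hnorm : ∀ w : F, w ≠ 0 → φ w = w → ∃ u : F, u ≠ 0 ∧ u ^ (q + 1) = w := by
    intro w hw hφw
    have h1 : w ^ (2 * r) = 1 := by
      rw [hφ, hq, pow_succ] at hφw
      exact mul_right_cancel₀ hw (by rw [hφw, one_mul])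
    have : NeZero (2 * r) := ⟨by omega⟩
    obtain ⟨i, _, hi⟩ := hθprim.eq_pow_of_pow_eq_one h1
    refine ⟨g ^ i, pow_ne_zero _ hg0, ?_⟩
    rw [← hi, hθ, ← pow_mul, ← pow_mul, hq]
    congr 1
    ring
  let W : Fin c × Fin (q + 1) → F := fun p => ν p.1 * (-1) ^ (p.2 : ℕ)
  let B : Fin c × Fin (q + 1) → F := fun p => g ^ (κ p.1 + 2 * r * (p.2 : ℕ))
  have hB : Function.Injective B := by
    rintro ⟨i, x⟩ ⟨j, y⟩ h
    have hlt : ∀ (i : Fin c) (x : Fin (q + 1)), κ i + 2 * r * (x : ℕ) < 4 * r * (r + 1) := by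
      intro i x
      have h1 := hκlt i
      have h2 : (x : ℕ) ≤ 2 * r + 1 := by have := x.2; omega
      nlinarith [Nat.mul_le_mul_left (2 * r) h2]
    have h1 := hg.pow_inj (hlt i x) (hlt j y) h
    have h2 : κ i = κ j := by
      have := congrArg (· % (2 * r)) h1
      simpa [Nat.add_mul_mod_self_left, Nat.mod_eq_of_lt (hκlt _)] using this
    have h3 : (x : ℕ) = y := by
      rw [h2] at h1
      exact Nat.eq_of_mul_eq_mul_left (by omega : 0 < 2 * r) (by omega)
    exact Prod.ext (hκ h2) (Fin.ext h3)
  have hU : ∀ p, ∃ u : F, u ≠ 0 ∧ u ^ (q + 1) = W p := by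
    intro p
    apply hnorm
    · exact mul_ne_zero (hν0 _) (pow_ne_zero _ (by simp))
    · simp [W, hφν]
  choose U hU0 hUW using hU
  have hsum : ∀ j l : ℕ, j < s → l < s → ∑ p, W p * B p ^ (q * j + l) = 0 := by
    intro j l hj hl
    have h1 : ∀ p, W p * B p ^ (q * j + l) =
        (ν p.1 * g ^ (κ p.1 * (q * j + l))) * (-ζ ^ (q * j + l)) ^ (p.2 : ℕ) := by
      intro p
      simp only [W, B]
      rw [neg_pow (ζ ^ (q * j + l)), hζ]
      ring
    simp_rw [h1]
    rw [Fintype.sum_prod_type]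
    simp_rw [← Finset.mul_sum]
    rw [← Finset.sum_mul]
    by_cases hz : -ζ ^ (q * j + l) = 1
    swap
    · rw [Fin.sum_univ_eq_sum_range (fun x => (-ζ ^ (q * j + l)) ^ x), geom_sum_eq hz]
      have : (-ζ ^ (q * j + l)) ^ (q + 1) = 1 := by
        rw [neg_pow, ← pow_mul, mul_comm _ (q + 1), pow_mul, hζ1, one_pow, mul_one]
        exact Even.neg_one_pow ⟨r + 1, by omega⟩
      rw [this]
      simp
    · have hdvd : 4 * r * (r + 1) ∣ 2 * r * (q * j + l) + 2 * r * (r + 1) := by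
        rw [← hg.pow_eq_one_iff_dvd, pow_add, hneg, pow_mul, ← hζ, mul_neg_one, hz]
      obtain ⟨k, hk⟩ := hdvd
      have hk2 : (q * j + l) + (r + 1) = 2 * (r + 1) * k := by
        apply Nat.eq_of_mul_eq_mul_left (by omega : 0 < 2 * r)
        linarith
      have hcase : (k = j + 1 ∧ l = j + (r + 1)) ∨ (k = j ∧ j = l + (r + 1)) := by
        rw [hq] at hk2
        have hk3 : l + (r + 1) + 2 * (r + 1) * j = 2 * (r + 1) * k + j := by linarith
        have hkj : j ≤ k := by
          by_contra h
          push Not at h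
          obtain ⟨d, rfl⟩ := Nat.exists_eq_add_of_lt h
          nlinarith
        obtain ⟨d, rfl⟩ := Nat.exists_eq_add_of_le hkj
        have hk4 : l + (r + 1) = 2 * (r + 1) * d + j := by linarith
        have hd : d < 2 := by
          by_contra h
          push Not at h
          nlinarith
        interval_cases d
        · right; omega
        · left; omega
      obtain ⟨m, t, hm, ht, he⟩ : ∃ m t, m + 1 < c1 ∧ (t = m ∨ t = m + r) ∧
          q * j + l = (r + 1) + 2 * (r + 1) * t := by
        rcases hcase with ⟨h1, h2⟩ | ⟨h1, h2⟩
        · refine ⟨j, j, by omega, Or.inl rfl, ?_⟩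
          rw [hq, h2]; ring
        · refine ⟨l, l + r, by omega, Or.inr rfl, ?_⟩
          rw [hq, h2]; ring
      rw [he, hsplit, houter m hm 0 (by omega) t ht, houter m hm 1 (by omega) t ht]
      simp
  have hsn : s < c * (q + 1) := by
    rw [hq]
    nlinarith
  let e := (finProdFinEquiv : Fin c × Fin (q + 1) ≃ Fin (c * (q + 1))).symm
  refine grs_code q _ s hF φ hφ hsn (fun i => B (e i)) (fun i => U (e i))
    (hB.comp e.injective) (fun i => hU0 _) ?_
  intro j l hj hl
  simp_rw [hUW]
  rw [← hsum j l hj hl]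
  exact Equiv.sum_comp e (fun p => W p * B p ^ (q * j + l))

/-- case q = 2ab+1 with a, b odd and coprime:
there exists an [n, n−s, s+1]_{q²} Hermitian dual-containing code with
n = c(q+1), for 1 ≤ c ≤ 2(a+b−1) and 1 ≤ s ≤ ab + c₁, where c₁ = c if
c ≤ a+b−1 and c₁ = ⌊c/2⌋ otherwise. -/
theorem stmt_12 (q a b : ℕ) (ha : 0 < a) (hb : 0 < b) (haodd : Odd a)
    (hbodd : Odd b) (hab : Nat.gcd a b = 1) (hq : q = 2 * a * b + 1)
    (hodd : Odd q) (hpp : IsPrimePow q)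
    (F : Type*) [Field F] [Fintype F] (hF : Fintype.card F = q ^ 2)
    (c s : ℕ) (hc1 : 1 ≤ c) (hc2 : c ≤ 2 * (a + b - 1))
    (hs1 : 1 ≤ s) (hs2 : s ≤ a * b + (if c ≤ a + b - 1 then c else c / 2)) :
    ∃ C : Submodule F (Fin (c * (q + 1)) → F),
      dualH q (c * (q + 1)) C ≤ C ∧
      Module.finrank F C = (c * (q + 1)) - s ∧
      IsLeast {d : ℕ | ∃ x ∈ C, x ≠ 0 ∧ wt x = d} (s + 1) := by
  classical
  have hr : 0 < a * b := Nat.mul_pos ha hb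
  have hq' : q = 2 * (a * b) + 1 := by rw [hq]; ring
  have habr : a + b - 1 ≤ a * b := by
    obtain ⟨a', rfl⟩ := Nat.exists_eq_add_of_lt ha
    obtain ⟨b', rfl⟩ := Nat.exists_eq_add_of_lt hb
    have : (0 + a' + 1) * (0 + b' + 1) = a' * b' + a' + b' + 1 := by ring
    rw [this]
    omega
  obtain ⟨φ, hφ⟩ : ∃ φ : F →+* F, ∀ x, φ x = x ^ q := by
    obtain ⟨p, k, hp, hk, hpk⟩ := hpp
    have hpp' : p.Prime := hp.nat_prime
    have : Fact p.Prime := ⟨hpp'⟩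
    obtain ⟨p', hchar⟩ := CharP.exists F
    obtain ⟨m, hp', hm⟩ := FiniteField.card F p'
    have hpp : p = p' := by
      have h1 : p ∣ p' ^ (m : ℕ) := by
        rw [← hm, hF, ← hpk, ← pow_mul]
        exact dvd_pow_self p (by positivity)
      exact (Nat.prime_dvd_prime_iff_eq hpp' hp').1 (hpp'.dvd_of_dvd_pow h1)
    subst hpp
    have : ExpChar F p := ExpChar.prime hpp'
    exact ⟨iterateFrobenius F p k, fun x => by rw [iterateFrobenius_def, hpk]⟩
  have hevens : ∀ m n : ℕ, ∀ f : Fin n → Fin m, Function.Injective f →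
      ∀ T : Finset (Fin m), (∀ i, f i ∈ T) → n ≤ T.card := by
    intro m n f hf T hT
    have h1 := Finset.card_le_card_of_injOn (s := (Finset.univ : Finset (Fin n))) (t := T) f
      (fun i _ => hT i) hf.injOn
    simpa using h1
  by_cases hc : c ≤ a + b - 1
  · rw [if_pos hc] at hs2
    refine key_code q (a * b) c c s hr hq' hF φ hφ (fun i => 2 * (i : ℕ)) ?_ ?_ ?_
      (by omega) (by omega) le_rfl hs2
    · intro i j h
      exact Fin.ext (by simpa using h)
    · intro i
      have := i.2
      omega
    · intro e he
      interval_cases e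
      · right
        simp
      · left
        simp
  · rw [if_neg hc] at hs2
    refine key_code q (a * b) c (c / 2) s hr hq' hF φ hφ (fun i => (i : ℕ)) ?_ ?_ ?_
      (by omega) (by omega) (by omega) hs2
    · exact Fin.val_injective
    · intro i
      have := i.2
      omega
    · intro e he
      right
      refine hevens c (c / 2) (fun i => ⟨2 * (i : ℕ) + e, by have := i.2; omega⟩) ?_ _ ?_
      · intro i j h
        simp only [Fin.mk.injEq] at h
        exact Fin.ext (by omega)
      · intro i
        simp only [Finset.mem_filter, Finset.mem_univ, true_and]
        omega
end
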